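/- arXiv:1310.0422 — 8 statements merged into one kernel-verified Lean document; each statement's English description precedes it below -/
import Mathlib

section
/- Let λ > 0, ε ∈ (0,1), m ≥ 3 an integer, and φ_ε(u) = -λ/(1+u) + λ ε^{m-2}/((m-1)(1+u)^{m-1}) for u ∈ (-1,∞). For every u₀ ∈ (-1,∞) there exists a unique differentiable function u : [0,∞) → (-1,∞) with u(0) = u₀ and u'(t) = -φ_ε'(u(t)) for all t ≥ 0; moreover min(u₀, -1+ε) ≤ u(t) ≤ max(u₀, -1+ε) for all t ≥ 0. In particular the solution exists globally in time and never reaches the obstacle value u = -1. -/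
open Set Filter Topology NNReal

/-- A globally Lipschitz, bounded autonomous vector field has a solution on `[0, ∞)` through
every initial value. -/
theorem exists_forall_hasDerivWithinAt_Ici_of_lipschitzWith_of_norm_le
    {E : Type*} [NormedAddCommGroup E] [NormedSpace ℝ E] [CompleteSpace E]
    {g : E → E} {K L : ℝ≥0} (hg : LipschitzWith K g) (hL : ∀ x, ‖g x‖ ≤ L) (x₀ : E) :
    ∃ u : ℝ → E, u 0 = x₀ ∧ ∀ t, 0 ≤ t → HasDerivWithinAt u (g (u t)) (Ici 0) t := by
  have solve (n : ℕ) : ∃ α : ℝ → E, α 0 = x₀ ∧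
      ∀ t ∈ Icc (0 : ℝ) n, HasDerivWithinAt α (g (α t)) (Icc (0 : ℝ) n) t := by
    refine IsPicardLindelof.exists_eq_forall_mem_Icc_hasDerivWithinAt₀ (f := fun _ ↦ g)
      (t₀ := ⟨0, left_mem_Icc.2 n.cast_nonneg⟩) (a := L * n) (K := K) (L := L)
      (IsPicardLindelof.of_time_independent (fun x _ ↦ hL x) hg.lipschitzOnWith ?_)
    simp
  choose α hα0 hα using solve
  have agree {n k : ℕ} (hnk : n ≤ k) : EqOn (α n) (α k) (Icc 0 n) := by
    have sub : Icc (0 : ℝ) n ⊆ Icc 0 k := Icc_subset_Icc_right (by exact_mod_cast hnk)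
    have right {j : ℕ} (hj : n ≤ j) (t : ℝ) (ht : t ∈ Ico (0 : ℝ) n) :
        HasDerivWithinAt (α j) (g (α j t)) (Ici t) t := by
      have htj : t < j := ht.2.trans_le (by exact_mod_cast hj)
      refine (hα j t ⟨ht.1, htj.le⟩).mono_of_mem_nhdsWithin ?_
      exact mem_of_superset (Icc_mem_nhdsGE htj) (Icc_subset_Icc_left ht.1)
    exact ODE_solution_unique_of_mem_Icc_right (v := fun _ ↦ g) (s := fun _ ↦ univ) (K := K)
      (fun _ _ ↦ hg.lipschitzOnWith)
      (fun t ht ↦ (hα n t ht).continuousWithinAt) (right le_rfl) (fun _ _ ↦ mem_univ _)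
      (fun t ht ↦ ((hα k t (sub ht)).mono sub).continuousWithinAt) (right hnk)
      (fun _ _ ↦ mem_univ _) (by rw [hα0, hα0])
  have eq_of_le_nat {t : ℝ} (ht : 0 ≤ t) {n : ℕ} (htn : t ≤ n) : α ⌈t⌉₊ t = α n t :=
    agree (Nat.ceil_le.2 htn) ⟨ht, Nat.le_ceil t⟩
  refine ⟨fun t ↦ α ⌈t⌉₊ t, by simp [hα0], fun t ht ↦ ?_⟩
  obtain ⟨n, hn⟩ := exists_nat_gt t
  have near : Icc (0 : ℝ) n ∈ 𝓝[Ici 0] t := by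
    filter_upwards [self_mem_nhdsWithin, nhdsWithin_le_nhds (Iio_mem_nhds hn)] with s hs hsn
    exact ⟨hs, le_of_lt hsn⟩
  have key := (hα n t ⟨ht, hn.le⟩).congr (f₁ := fun t ↦ α ⌈t⌉₊ t)
    (fun s hs ↦ eq_of_le_nat hs.1 hs.2) (eq_of_le_nat ht hn.le)
  simpa only [eq_of_le_nat ht hn.le] using key.mono_of_mem_nhdsWithin near

/-- A function on `[0, ∞)` that starts below `b`, and whose derivative is nonpositive wherever
it is at least `b`, stays below `b`. -/
theorem le_of_hasDerivWithinAt_nonpos_of_le {u u' : ℝ → ℝ} {b : ℝ} (h0 : u 0 ≤ b)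
    (hu : ∀ t, 0 ≤ t → HasDerivWithinAt u (u' t) (Ici 0) t)
    (hu' : ∀ t, 0 ≤ t → b ≤ u t → u' t ≤ 0) {t : ℝ} (ht : 0 ≤ t) : u t ≤ b := by
  have fence (δ : ℝ) (hδ : 0 < δ) : u t ≤ b + δ * t := by
    refine image_le_of_deriv_right_lt_deriv_boundary (a := 0) (b := t) (f' := u')
      (B := fun s ↦ b + δ * s) (B' := fun _ ↦ δ)
      (fun s hs ↦ (hu s hs.1).continuousWithinAt.mono Icc_subset_Ici_self)
      (fun s hs ↦ (hu s hs.1).mono (Ici_subset_Ici.2 hs.1)) (by simpa using h0)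
      (fun s ↦ by simpa using ((hasDerivAt_id s).const_mul δ).const_add b)
      (fun s hs hsb ↦ ?_) ⟨ht, le_rfl⟩
    refine (hu' s hs.1 ?_).trans_lt hδ
    rw [hsb]
    exact le_add_of_nonneg_right (mul_nonneg hδ.le hs.1)
  refine le_of_forall_pos_le_add fun η hη ↦ (fence (η / (t + 1)) (by positivity)).trans ?_
  have : η / (t + 1) * t ≤ η := by
    rw [div_mul_eq_mul_div, div_le_iff₀ (by positivity)]
    nlinarith
  linarith

/-- Two functions on `[0, ∞)` with values in a set on which the vector field is Lipschitz, with
the same initial value and solving the same autonomous equation, agree. -/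
theorem eq_of_hasDerivWithinAt_Ici_of_lipschitzOnWith
    {E : Type*} [NormedAddCommGroup E] [NormedSpace ℝ E] {f : E → E} {s : Set E} {K : ℝ≥0}
    (hf : LipschitzOnWith K f s) {u v : ℝ → E} (h0 : u 0 = v 0)
    (hu : ∀ t, 0 ≤ t → HasDerivWithinAt u (f (u t)) (Ici 0) t) (hus : ∀ t, 0 ≤ t → u t ∈ s)
    (hv : ∀ t, 0 ≤ t → HasDerivWithinAt v (f (v t)) (Ici 0) t) (hvs : ∀ t, 0 ≤ t → v t ∈ s)
    {t : ℝ} (ht : 0 ≤ t) : u t = v t :=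
  ODE_solution_unique_of_mem_Icc_right (v := fun _ ↦ f) (s := fun _ ↦ s) (a := 0) (b := t)
    (fun _ _ ↦ hf)
    (fun r hr ↦ (hu r hr.1).continuousWithinAt.mono Icc_subset_Ici_self)
    (fun r hr ↦ (hu r hr.1).mono (Ici_subset_Ici.2 hr.1)) (fun r hr ↦ hus r hr.1)
    (fun r hr ↦ (hv r hr.1).continuousWithinAt.mono Icc_subset_Ici_self)
    (fun r hr ↦ (hv r hr.1).mono (Ici_subset_Ici.2 hr.1)) (fun r hr ↦ hvs r hr.1)
    h0 ⟨ht, le_rfl⟩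

/-- If `f` is Lipschitz on `[a, b]` and points into the interval at its endpoints, then `x' = f x`
has a solution on `[0, ∞)` with values in `[a, b]` through every point of `[a, b]`. -/
theorem exists_forall_mem_Icc_hasDerivWithinAt_Ici {f : ℝ → ℝ} {a b x₀ : ℝ} {K : ℝ≥0}
    (hf : LipschitzOnWith K f (Icc a b)) (ha : 0 ≤ f a) (hb : f b ≤ 0) (hx₀ : x₀ ∈ Icc a b) :
    ∃ u : ℝ → ℝ, u 0 = x₀ ∧ (∀ t, 0 ≤ t → u t ∈ Icc a b) ∧
      ∀ t, 0 ≤ t → HasDerivWithinAt u (f (u t)) (Ici 0) t := by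
  have hab : a ≤ b := hx₀.1.trans hx₀.2
  let p : ℝ → ℝ := fun x ↦ max a (min b x)
  have hp_mem (x : ℝ) : p x ∈ Icc a b := ⟨le_max_left _ _, max_le hab (min_le_left _ _)⟩
  have hp : LipschitzWith 1 p := (LipschitzWith.id.const_min b).const_max a
  have hfp : LipschitzWith (K * 1) (f ∘ p) :=
    lipschitzOnWith_univ.1 (hf.comp hp.lipschitzOnWith fun x _ ↦ hp_mem x)
  obtain ⟨C, hC⟩ := isCompact_Icc.exists_bound_of_continuousOn hf.continuousOn
  obtain ⟨u, hu0, hu⟩ := exists_forall_hasDerivWithinAt_Ici_of_lipschitzWith_of_norm_le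
    (L := C.toNNReal) hfp (fun x ↦ (hC _ (hp_mem x)).trans (Real.le_coe_toNNReal C)) x₀
  have upper {t : ℝ} (ht : 0 ≤ t) : u t ≤ b := by
    refine le_of_hasDerivWithinAt_nonpos_of_le (hu0.trans_le hx₀.2) hu (fun s _ hs ↦ ?_) ht
    simpa [p, hs, hab] using hb
  have lower {t : ℝ} (ht : 0 ≤ t) : a ≤ u t := by
    refine neg_le_neg_iff.1 (le_of_hasDerivWithinAt_nonpos_of_le (u := fun t ↦ -u t)
      (by simpa [hu0] using hx₀.1) (fun s hs ↦ (hu s hs).neg) (fun s _ hs ↦ ?_) ht)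
    have hs' : u s ≤ a := neg_le_neg_iff.1 hs
    simpa [p, hs', hs'.trans hab] using ha
  refine ⟨u, hu0, fun t ht ↦ ⟨lower ht, upper ht⟩, fun t ht ↦ ?_⟩
  simpa [p, lower ht, upper ht] using hu t ht

/-- The derivative of the regularized MEMS potential on `(-1, ∞)`. -/
theorem hasDerivAt_memsPotential (lam ε : ℝ) {m : ℕ} (hm : 3 ≤ m) {x : ℝ} (hx : -1 < x) :
    HasDerivAt (fun u : ℝ ↦ -lam / (1 + u)
      + lam * ε ^ (m - 2) / (((m : ℝ) - 1) * (1 + u) ^ (m - 1)))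
      (lam * ((1 + x) ^ (m - 2) - ε ^ (m - 2)) / (1 + x) ^ m) x := by
  obtain ⟨k, rfl⟩ := Nat.exists_eq_add_of_le' hm
  have hx' : 1 + x ≠ 0 := by linarith
  have hk : (k : ℝ) + 2 ≠ 0 := by positivity
  have hcast : ((k + 3 : ℕ) : ℝ) - 1 = k + 2 := by push_cast; ring
  have h1 : HasDerivAt (fun u : ℝ ↦ 1 + u) 1 x := (hasDerivAt_id x).const_add 1
  have h2 := ((hasDerivAt_const x (-lam)).fun_div h1 hx').fun_add
    ((hasDerivAt_const x (lam * ε ^ (k + 1))).fun_div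
      ((h1.fun_pow (k + 2)).const_mul ((k : ℝ) + 2)) (by positivity))
  rw [hcast, show k + 3 - 2 = k + 1 by omega, show k + 3 - 1 = k + 2 by omega]
  refine h2.congr_deriv ?_
  rw [show k + 2 - 1 = k + 1 by omega]
  push_cast
  field_simp
  ring

/-- Global existence, uniqueness and trapping for the gradient-flow ODE
`u' = -φ_ε'(u)` of the regularized MEMS potential: for every initial value
`u₀ ∈ (-1,∞)` there is a unique solution on `[0,∞)`, which stays between
`min(u₀, -1+ε)` and `max(u₀, -1+ε)` (in particular it never reaches `-1`). -/
theorem stmt_3 (lam ε : ℝ) (m : ℕ) (hlam : 0 < lam) (hε : ε ∈ Set.Ioo (0:ℝ) 1)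
    (hm : 3 ≤ m) (φ : ℝ → ℝ)
    (hφ : ∀ u : ℝ, φ u = -lam / (1 + u)
      + lam * ε ^ (m - 2) / (((m : ℝ) - 1) * (1 + u) ^ (m - 1)))
    (u₀ : ℝ) (hu₀ : -1 < u₀) :
    ∃ u : ℝ → ℝ,
      (u 0 = u₀ ∧
        (∀ t : ℝ, 0 ≤ t → -1 < u t) ∧
        (∀ t : ℝ, 0 ≤ t →
          HasDerivWithinAt u (-(deriv φ (u t))) (Set.Ici (0 : ℝ)) t) ∧
        (∀ t : ℝ, 0 ≤ t → min u₀ (-1 + ε) ≤ u t ∧ u t ≤ max u₀ (-1 + ε))) ∧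
      (∀ v : ℝ → ℝ,
        (v 0 = u₀ ∧
          (∀ t : ℝ, 0 ≤ t → -1 < v t) ∧
          (∀ t : ℝ, 0 ≤ t →
            HasDerivWithinAt v (-(deriv φ (v t))) (Set.Ici (0 : ℝ)) t)) →
        ∀ t : ℝ, 0 ≤ t → v t = u t) := by
  obtain ⟨hε0, -⟩ := hε
  set a := min u₀ (-1 + ε)
  set b := max u₀ (-1 + ε)
  have ha : -1 < a := lt_min hu₀ (by linarith)
  have haε : a ≤ -1 + ε := min_le_right _ _
  have hbε : -1 + ε ≤ b := le_max_right _ _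
  have hu₀ab : u₀ ∈ Icc a b := ⟨min_le_left _ _, le_max_left _ _⟩
  have hderiv {x : ℝ} (hx : -1 < x) :
      deriv φ x = lam * ((1 + x) ^ (m - 2) - ε ^ (m - 2)) / (1 + x) ^ m := by
    rw [funext hφ]
    exact (hasDerivAt_memsPotential lam ε hm hx).deriv
  have hnonneg {x : ℝ} (hx : -1 + ε ≤ x) : 0 ≤ deriv φ x := by
    have hx0 : 0 ≤ 1 + x := by linarith
    rw [hderiv (by linarith)]
    have := pow_le_pow_left₀ hε0.le (show ε ≤ 1 + x by linarith) (m - 2)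
    exact div_nonneg (mul_nonneg hlam.le (sub_nonneg.2 this)) (pow_nonneg hx0 _)
  have hnonpos {x : ℝ} (hx : -1 < x) (hxε : x ≤ -1 + ε) : deriv φ x ≤ 0 := by
    have hx0 : 0 ≤ 1 + x := by linarith
    rw [hderiv hx]
    have := pow_le_pow_left₀ hx0 (show 1 + x ≤ ε by linarith) (m - 2)
    exact div_nonpos_of_nonpos_of_nonneg
      (mul_nonpos_of_nonneg_of_nonpos hlam.le (sub_nonpos.2 this)) (pow_nonneg hx0 _)
  obtain ⟨K, hK⟩ : ∃ K, LipschitzOnWith K (fun x ↦ -deriv φ x) (Icc a b) := by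
    have hC1 : ContDiffOn ℝ 1 (fun x ↦ -deriv φ x) (Icc a b) := by
      refine ContDiffOn.congr
        (f := fun x ↦ -(lam * ((1 + x) ^ (m - 2) - ε ^ (m - 2)) / (1 + x) ^ m)) ?_
        fun x hx ↦ by rw [hderiv (ha.trans_le hx.1)]
      refine (ContDiffOn.div (by fun_prop) (by fun_prop) fun x hx ↦ ?_).neg
      have : 0 < 1 + x := by linarith [hx.1]
      positivity
    exact hC1.exists_lipschitzOnWith one_ne_zero (convex_Icc a b) isCompact_Icc
  obtain ⟨u, hu0, hu_mem, hu⟩ := exists_forall_mem_Icc_hasDerivWithinAt_Ici hK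
    (neg_nonneg.2 (hnonpos ha haε)) (neg_nonpos.2 (hnonneg hbε)) hu₀ab
  refine ⟨u, ⟨hu0, fun t ht ↦ ha.trans_le (hu_mem t ht).1, hu, hu_mem⟩, ?_⟩
  rintro v ⟨hv0, hv_gt, hv⟩ t ht
  have hv_le {s : ℝ} (hs : 0 ≤ s) : v s ≤ b :=
    le_of_hasDerivWithinAt_nonpos_of_le (hv0.trans_le hu₀ab.2) hv
      (fun r _ hr ↦ neg_nonpos.2 (hnonneg (hbε.trans hr))) hs
  have hv_ge {s : ℝ} (hs : 0 ≤ s) : a ≤ v s := by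
    refine neg_le_neg_iff.1 (le_of_hasDerivWithinAt_nonpos_of_le (u := fun t ↦ -v t)
      (by simpa [hv0] using hu₀ab.1) (fun r hr ↦ (hv r hr).neg) (fun r hr hra ↦ ?_) hs)
    simpa using hnonpos (hv_gt r hr) ((neg_le_neg_iff.1 hra).trans haε)
  exact eq_of_hasDerivWithinAt_Ici_of_lipschitzOnWith hK (hv0.trans hu0.symm) hv
    (fun s hs ↦ ⟨hv_ge hs, hv_le hs⟩) hu hu_mem ht
end

section
/- Let m ≥ 3 be an integer and K > 0, C > 0. There exists δ > 0 (depending only on m, K, C) such that for every function u : [0,1] → ℝ satisfying u(x) > -1 for all x, |u(x) - u(y)| ≤ K|x - y| for all x, y ∈ [0,1], and ∫₀¹ (1 + u(x))^{-(m-1)} dx ≤ C, one has 1 + u(x) ≥ δ for all x ∈ [0,1]. -/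
open MeasureTheory

/-- A priori pointwise lower bound in dimension 1: a Lipschitz function on `[0,1]`
staying above `-1` whose energy integral `∫₀¹ (1+u)^{-(m-1)}` is bounded by `C`
stays uniformly away from the obstacle value `-1`, with a gap `δ > 0` depending
only on `m`, `K`, `C`. -/
theorem stmt_4 (m : ℕ) (hm : 3 ≤ m) (K C : ℝ) (hK : 0 < K) (hC : 0 < C) :
    ∃ δ : ℝ, 0 < δ ∧
      ∀ u : ℝ → ℝ,
        (∀ x ∈ Set.Icc (0 : ℝ) 1, -1 < u x) →
        (∀ x ∈ Set.Icc (0 : ℝ) 1, ∀ y ∈ Set.Icc (0 : ℝ) 1,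
          |u x - u y| ≤ K * |x - y|) →
        (∫ x in Set.Icc (0 : ℝ) 1, ((1 + u x) ^ (m - 1))⁻¹) ≤ C →
        ∀ x ∈ Set.Icc (0 : ℝ) 1, δ ≤ 1 + u x := by
  have hD : 0 < (1 + K) ^ (m - 1) := by positivity
  refine ⟨min 1 (C * (1 + K) ^ (m - 1))⁻¹, by positivity, fun u hu hlip henergy x hx => ?_⟩
  rcases le_or_gt 1 (1 + u x) with h1 | h1
  · exact (min_le_left _ _).trans h1
  refine (min_le_right _ _).trans ?_
  have ha : 0 < 1 + u x := by linarith [hu x hx]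
  generalize hadef : 1 + u x = a at h1 ha
  -- an interval of length `a` inside `[0, 1]` containing `x`
  set c := x * (1 - a) with hc
  have hc0 : 0 ≤ c := mul_nonneg hx.1 (by linarith)
  have hcx : c ≤ x := by nlinarith [hx.1]
  have hxc : x ≤ c + a := by nlinarith [hx.2]
  have hc1 : c + a ≤ 1 := by nlinarith [hx.2]
  have hsub : Set.Icc c (c + a) ⊆ Set.Icc (0 : ℝ) 1 := Set.Icc_subset_Icc hc0 hc1
  have hcont : ContinuousOn u (Set.Icc (0 : ℝ) 1) :=
    (LipschitzOnWith.of_dist_le_mul (K := ⟨K, hK.le⟩) hlip).continuousOn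
  have hpos : ∀ y ∈ Set.Icc (0 : ℝ) 1, 0 < (1 + u y) ^ (m - 1) := fun y hy =>
    pow_pos (by linarith [hu y hy]) _
  have hInt : IntegrableOn (fun y => ((1 + u y) ^ (m - 1))⁻¹) (Set.Icc (0 : ℝ) 1) :=
    (((continuousOn_const.add hcont).pow _).inv₀
      fun y hy => (hpos y hy).ne').integrableOn_compact isCompact_Icc
  have hpt : ∀ y ∈ Set.Icc c (c + a),
      ((1 + K) ^ (m - 1) * a ^ 2)⁻¹ ≤ ((1 + u y) ^ (m - 1))⁻¹ := by
    intro y hy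
    refine inv_anti₀ (hpos y (hsub hy)) ?_
    have hyx : |y - x| ≤ a := abs_le.2 ⟨by linarith [hy.1], by linarith [hy.2]⟩
    have hle : 1 + u y ≤ (1 + K) * a := by
      have := (le_abs_self _).trans (hlip y (hsub hy) x hx)
      nlinarith
    calc (1 + u y) ^ (m - 1) ≤ ((1 + K) * a) ^ (m - 1) :=
          pow_le_pow_left₀ (by linarith [hu y (hsub hy)]) hle _
      _ = (1 + K) ^ (m - 1) * a ^ (m - 1) := mul_pow _ _ _
      _ ≤ (1 + K) ^ (m - 1) * a ^ 2 :=
          mul_le_mul_of_nonneg_left (pow_le_pow_of_le_one ha.le h1.le (by omega)) hD.le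
  have hlow : a * ((1 + K) ^ (m - 1) * a ^ 2)⁻¹ ≤ C := calc
    a * ((1 + K) ^ (m - 1) * a ^ 2)⁻¹
        = ∫ _ in Set.Icc c (c + a), ((1 + K) ^ (m - 1) * a ^ 2)⁻¹ := by
          simp [ha.le]
    _ ≤ ∫ y in Set.Icc c (c + a), ((1 + u y) ^ (m - 1))⁻¹ :=
          setIntegral_mono_on continuous_const.integrableOn_Icc (hInt.mono_set hsub)
            measurableSet_Icc hpt
    _ ≤ ∫ y in Set.Icc (0 : ℝ) 1, ((1 + u y) ^ (m - 1))⁻¹ :=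
          setIntegral_mono_set hInt
            (ae_restrict_of_forall_mem measurableSet_Icc
              fun y hy => (inv_pos.2 (hpos y hy)).le)
            hsub.eventuallyLE
    _ ≤ C := henergy
  rw [inv_le_iff_one_le_mul₀ (by positivity)]
  rw [← div_eq_mul_inv, div_le_iff₀ (by positivity)] at hlow
  nlinarith
end

section
/- Let α ∈ (0,1], let m be an integer with m > 1 + 2/α, and let K > 0, C > 0. Let Ω ⊂ ℝ² be the closed unit disc. There exists δ > 0 (depending only on m, α, K, C) such that for every function u : Ω → ℝ satisfying u(x) > -1 for all x ∈ Ω, the Hölder bound |u(x) - u(y)| ≤ K|x - y|^α for all x, y ∈ Ω, and ∫_Ω (1 + u(x))^{-(m-1)} dx ≤ C, one has 1 + u(x) ≥ δ for all x ∈ Ω. -/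
open MeasureTheory

/-- A point of the closed unit ball is within distance `r` of every point of some closed ball of
radius `r / 2` contained in the closed unit ball. -/
lemma exists_closedBall_half_subset_inter {E : Type*} [SeminormedAddCommGroup E] [NormedSpace ℝ E]
    {x : E} (hx : x ∈ Metric.closedBall (0 : E) 1) {r : ℝ} (hr₀ : 0 ≤ r) (hr₁ : r ≤ 1) :
    ∃ z : E, Metric.closedBall z (r / 2) ⊆ Metric.closedBall 0 1 ∩ Metric.closedBall x r := by
  rw [mem_closedBall_zero_iff] at hx
  refine ⟨(1 - r / 2) • x, Set.subset_inter ?_ ?_⟩ <;> apply Metric.closedBall_subset_closedBall'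
  · rw [dist_zero_right, norm_smul, Real.norm_of_nonneg (by linarith)]
    nlinarith
  · rw [dist_eq_norm, show (1 - r / 2) • x - x = (-(r / 2)) • x by module, norm_smul, norm_neg,
      Real.norm_of_nonneg (by linarith)]
    nlinarith

/-- A function that is Hölder with a positive exponent on a set is continuous there. -/
lemma continuousOn_of_abs_sub_le_mul_dist_rpow {X : Type*} [PseudoMetricSpace X] {s : Set X}
    {u : X → ℝ} {K α : ℝ} (hα : 0 < α)
    (hu : ∀ x ∈ s, ∀ y ∈ s, |u x - u y| ≤ K * dist x y ^ α) : ContinuousOn u s := by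
  intro x hx
  refine tendsto_iff_dist_tendsto_zero.2 (squeeze_zero' (.of_forall fun _ => dist_nonneg)
    (eventually_mem_nhdsWithin.mono fun y hy => hu y hy x hx) ?_)
  have h : Continuous fun y => K * dist y x ^ α :=
    continuous_const.mul ((continuous_id.dist continuous_const).rpow_const fun _ => .inr hα.le)
  simpa [Real.zero_rpow hα.ne'] using (h.tendsto x).mono_left (nhdsWithin_le_nhds (s := s))

/-- If `u > -1` is Hölder on the closed unit ball and `d = 1 + u x` is at most the Hölder constant,
then the integral of `(1 + u)⁻ⁿ` is at least the contribution of a ball of radius comparable to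
`(d / K) ^ (1 / α)` on which `1 + u ≤ 2 d`. -/
lemma le_setIntegral_inv_pow_of_holder {E : Type*} [NormedAddCommGroup E] [NormedSpace ℝ E]
    [FiniteDimensional ℝ E] [MeasurableSpace E] [BorelSpace E] (μ : Measure E) [μ.IsAddHaarMeasure]
    {u : E → ℝ} {K α : ℝ} (hα : 0 < α) (hK : 0 < K) (n : ℕ)
    (hpos : ∀ x ∈ Metric.closedBall (0 : E) 1, -1 < u x)
    (hu : ∀ x ∈ Metric.closedBall (0 : E) 1, ∀ y ∈ Metric.closedBall (0 : E) 1,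
      |u x - u y| ≤ K * dist x y ^ α)
    {x : E} (hx : x ∈ Metric.closedBall (0 : E) 1) (hxK : 1 + u x ≤ K) :
    (((1 + u x) / K) ^ (1 / α) / 2) ^ Module.finrank ℝ E * μ.real (Metric.ball 0 1) *
      ((2 * (1 + u x)) ^ n)⁻¹ ≤ ∫ y in Metric.closedBall (0 : E) 1, ((1 + u y) ^ n)⁻¹ ∂μ := by
  have hd : 0 < 1 + u x := by linarith [hpos x hx]
  set r : ℝ := ((1 + u x) / K) ^ (1 / α) with hr
  have hr₀ : 0 ≤ r := by positivity
  have hr₁ : r ≤ 1 := Real.rpow_le_one (by positivity) ((div_le_one hK).2 hxK) (by positivity)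
  have hrα : K * r ^ α = 1 + u x := by
    rw [hr, ← Real.rpow_mul (by positivity), one_div_mul_cancel hα.ne', Real.rpow_one]
    field_simp
  obtain ⟨z, hz⟩ := exists_closedBall_half_subset_inter hx hr₀ hr₁
  have hInt : IntegrableOn (fun y => ((1 + u y) ^ n)⁻¹) (Metric.closedBall (0 : E) 1) μ := by
    refine ContinuousOn.integrableOn_compact (isCompact_closedBall _ _) (ContinuousOn.inv₀
      ((continuousOn_const.add (continuousOn_of_abs_sub_le_mul_dist_rpow hα hu)).pow n) ?_)
    intro y hy
    have : 0 < 1 + u y := by linarith [hpos y hy]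
    positivity
  calc _ = ∫ _ in Metric.closedBall z (r / 2), ((2 * (1 + u x)) ^ n)⁻¹ ∂μ := by
        rw [setIntegral_const, Measure.addHaar_real_closedBall μ z (by positivity), smul_eq_mul]
    _ ≤ ∫ y in Metric.closedBall z (r / 2), ((1 + u y) ^ n)⁻¹ ∂μ := by
        refine setIntegral_mono_on (integrableOn_const measure_closedBall_lt_top.ne)
          (hInt.mono_set fun y hy => (hz hy).1) measurableSet_closedBall fun y hy => ?_
        obtain ⟨hy₁, hy₂⟩ := hz hy
        have hy₀ : 0 < 1 + u y := by linarith [hpos y hy₁]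
        have hyr : K * dist y x ^ α ≤ K * r ^ α := by
          gcongr
          exact hy₂
        have hle : 1 + u y ≤ 2 * (1 + u x) := by
          linarith [le_abs_self (u y - u x), hu y hy₁ x hx]
        gcongr
    _ ≤ _ := by
        refine setIntegral_mono_set hInt ?_ (LE.le.eventuallyLE fun y hy => (hz hy).1)
        filter_upwards [ae_restrict_mem measurableSet_closedBall] with y hy
        have : 0 < 1 + u y := by linarith [hpos y hy]
        simp only [Pi.zero_apply]
        positivity

/-- A priori pointwise lower bound in dimension 2: a `C^{0,α}` Hölder function on the
closed unit disc `Ω ⊂ ℝ²` staying above `-1` whose energy integral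
`∫_Ω (1+u)^{-(m-1)}` is bounded by `C` stays uniformly away from the obstacle value
`-1`, with a gap `δ > 0` depending only on `m`, `α`, `K`, `C`, provided the
regularization exponent satisfies `m > 1 + 2/α`. -/
theorem stmt_5 (α : ℝ) (hα : α ∈ Set.Ioc (0 : ℝ) 1) (m : ℕ)
    (hm : (1 : ℝ) + 2 / α < (m : ℝ)) (K C : ℝ) (hK : 0 < K) (hC : 0 < C) :
    ∃ δ : ℝ, 0 < δ ∧
      ∀ u : EuclideanSpace ℝ (Fin 2) → ℝ,
        (∀ x ∈ Metric.closedBall (0 : EuclideanSpace ℝ (Fin 2)) 1, -1 < u x) →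
        (∀ x ∈ Metric.closedBall (0 : EuclideanSpace ℝ (Fin 2)) 1,
          ∀ y ∈ Metric.closedBall (0 : EuclideanSpace ℝ (Fin 2)) 1,
            |u x - u y| ≤ K * dist x y ^ α) →
        (∫ x in Metric.closedBall (0 : EuclideanSpace ℝ (Fin 2)) 1,
          ((1 + u x) ^ (m - 1))⁻¹) ≤ C →
        ∀ x ∈ Metric.closedBall (0 : EuclideanSpace ℝ (Fin 2)) 1, δ ≤ 1 + u x := by
  obtain ⟨hα₀, -⟩ := hα
  set c : ℝ := volume.real (Metric.ball (0 : EuclideanSpace ℝ (Fin 2)) 1) with hc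
  have hc₀ : 0 < c := 
    ENNReal.toReal_pos (Metric.measure_ball_pos _ _ one_pos).ne' measure_ball_lt_top.ne
  have hm₁ : 1 ≤ m := by
    have : (1 : ℝ) < m := by linarith [div_pos two_pos hα₀]
    exact_mod_cast this.le
  set β : ℝ := ((m - 1 : ℕ) : ℝ) - 2 / α with hβ
  have hβ₀ : 0 < β := by
    rw [hβ, Nat.cast_sub hm₁]
    push_cast
    linarith
  set A : ℝ := c / (4 * K ^ (2 / α) * C * 2 ^ (m - 1)) with hA
  have hA₀ : 0 < A := by positivity
  refine ⟨min K (A ^ (1 / β)), lt_min hK (by positivity), fun u hpos hu hInt x hx => ?_⟩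
  rcases le_total K (1 + u x) with hxK | hxK
  · exact (min_le_left _ _).trans hxK
  refine (min_le_right _ _).trans ?_
  have hd : 0 < 1 + u x := by linarith [hpos x hx]
  have key := (le_setIntegral_inv_pow_of_holder volume hα₀ hK (m - 1) hpos hu hx hxK).trans hInt
  rw [finrank_euclideanSpace_fin, ← hc] at key
  generalize 1 + u x = d at hd key
  have hsq : ((d / K) ^ (1 / α)) ^ 2 = d ^ (2 / α) / K ^ (2 / α) := by
    rw [← Real.rpow_natCast, ← Real.rpow_mul (by positivity), ← Real.div_rpow hd.le hK.le]
    congr 1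
    push_cast
    ring
  have hAd : A ≤ d ^ β := by
    rw [hβ, Real.rpow_sub hd, Real.rpow_natCast, hA, div_le_div_iff₀ (by positivity) (by positivity)]
    rw [div_pow, hsq, mul_pow, ← div_eq_mul_inv, div_le_iff₀ (by positivity)] at key
    field_simp at key
    linarith
  calc A ^ (1 / β) ≤ (d ^ β) ^ (1 / β) := by gcongr
    _ = d := by rw [← Real.rpow_mul hd.le, mul_one_div_cancel hβ₀.ne', Real.rpow_one]
end

section
/- Let λ > 0 and m ≥ 3 an integer. Suppose v : ℝ → (0,∞) is four times continuously differentiable, satisfies -v''''(ξ) = λ(1/v(ξ)² - 1/v(ξ)^m) for all ξ ∈ ℝ, and v(ξ) → 1, v'(ξ) → 0, v''(ξ) → 0, v'''(ξ) → 0 as ξ → -∞. Then for all ξ ∈ ℝ: -v'''(ξ) v'(ξ) + (1/2) v''(ξ)² + λ/v(ξ) - λ/((m-1) v(ξ)^{m-1}) = λ(m-2)/(m-1). -/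
open Filter

/-- First integral of the fourth-order inner (transition-layer) equation
`-v'''' = λ(1/v² - 1/v^m)` for the regularized bi-Laplacian MEMS model: a positive
`C⁴` solution with `v → 1`, `v' → 0`, `v'' → 0`, `v''' → 0` as `ξ → -∞` satisfies
`-v''' v' + (1/2) v''² + λ/v - λ/((m-1) v^(m-1)) = λ(m-2)/(m-1)` everywhere. -/
theorem stmt_8 (lam : ℝ) (m : ℕ) (hlam : 0 < lam) (hm : 3 ≤ m)
    (v v' v'' v''' : ℝ → ℝ) (hpos : ∀ ξ : ℝ, 0 < v ξ)
    (hder1 : ∀ ξ : ℝ, HasDerivAt v (v' ξ) ξ)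
    (hder2 : ∀ ξ : ℝ, HasDerivAt v' (v'' ξ) ξ)
    (hder3 : ∀ ξ : ℝ, HasDerivAt v'' (v''' ξ) ξ)
    (hder4 : ∀ ξ : ℝ, HasDerivAt v'''
      (-(lam * (1 / (v ξ) ^ 2 - 1 / (v ξ) ^ m))) ξ)
    (hlim1 : Tendsto v atBot (nhds 1))
    (hlim2 : Tendsto v' atBot (nhds 0))
    (hlim3 : Tendsto v'' atBot (nhds 0))
    (hlim4 : Tendsto v''' atBot (nhds 0)) :
    ∀ ξ : ℝ,
      -(v''' ξ) * v' ξ + (1 / 2) * (v'' ξ) ^ 2 + lam / v ξ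
          - lam / (((m : ℝ) - 1) * (v ξ) ^ (m - 1))
        = lam * ((m : ℝ) - 2) / ((m : ℝ) - 1) := by
  obtain ⟨n, rfl⟩ : ∃ n, m = n + 3 := ⟨m - 3, by omega⟩
  have hsub : n + 3 - 1 = n + 2 := rfl
  have hcast : ((n + 3 : ℕ) : ℝ) - 1 = n + 2 := by
    push_cast
    ring
  have hn : ((n + 3 : ℕ) : ℝ) - 1 ≠ 0 := by
    rw [hcast]
    positivity
  rw [hsub]
  set E : ℝ → ℝ := fun ξ => -(v''' ξ) * v' ξ + (1 / 2) * (v'' ξ) ^ 2 + lam / v ξ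
    - lam / ((((n + 3 : ℕ) : ℝ) - 1) * (v ξ) ^ (n + 2))
  have hderiv : ∀ ξ, HasDerivAt E 0 ξ := by
    intro ξ
    have hv : v ξ ≠ 0 := (hpos ξ).ne'
    have h := ((((hder4 ξ).neg.mul (hder2 ξ)).add (((hder3 ξ).pow 2).const_mul (1 / 2))).add
      ((hasDerivAt_const ξ lam).div (hder1 ξ) hv)).sub
      ((hasDerivAt_const ξ lam).div (((hder1 ξ).pow (n + 2)).const_mul
        (((n + 3 : ℕ) : ℝ) - 1)) (mul_ne_zero hn (pow_ne_zero _ hv)))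
    refine h.congr_deriv ?_
    simp only [Pi.neg_apply, Pi.pow_apply, hcast]
    push_cast
    field_simp
    simp only [zero_mul, zero_sub]
    ring
  have hlim : Tendsto E atBot
      (nhds (lam * (((n + 3 : ℕ) : ℝ) - 2) / (((n + 3 : ℕ) : ℝ) - 1))) := by
    have h := (((hlim4.neg.mul hlim2).add ((hlim3.pow 2).const_mul (1 / 2))).add
      ((tendsto_const_nhds (x := lam)).div hlim1 one_ne_zero)).sub
      ((tendsto_const_nhds (x := lam)).div
        ((hlim1.pow (n + 2)).const_mul (((n + 3 : ℕ) : ℝ) - 1)) (by simpa using hn))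
    convert h using 2
    · rfl
    · simp only [one_pow]
      field_simp
      ring
  intro ξ
  have hconst : E = fun _ => E ξ := funext fun x =>
    is_const_of_deriv_eq_zero (fun y => (hderiv y).differentiableAt)
      (fun y => (hderiv y).deriv) x ξ
  rw [hconst] at hlim
  exact tendsto_nhds_unique tendsto_const_nhds hlim
end

section
/- For every α ∈ (0,1), the improper integral l₀(α) = ∫_{-1+α}^{0} [2(1/α - 1/(1+u))]^{-1/2} du converges and equals √(α/2) ( √(1-α) + α ln(1 + √(1-α)) - α ln(√α) ). -/
open MeasureTheory

/-- A primitive of `u ↦ √(1 + u) / √(1 + u - α)`. -/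
noncomputable def travelPrimitive (α u : ℝ) : ℝ :=
  √(1 + u) * √(1 + u - α) + α * Real.log (√(1 + u) + √(1 + u - α))

lemma continuousOn_travelPrimitive {α : ℝ} (hα : 0 < α) :
    ContinuousOn (travelPrimitive α) (Set.Ici (-1 + α)) := by
  unfold travelPrimitive
  refine ContinuousOn.add (by fun_prop) (continuousOn_const.mul (ContinuousOn.log (by fun_prop) ?_))
  intro u hu
  have hu : -1 + α ≤ u := hu
  have : 0 < √(1 + u) := Real.sqrt_pos.2 (by linarith)
  positivity

lemma hasDerivAt_travelPrimitive {α u : ℝ} (hα : 0 < α) (hu : -1 + α < u) :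
    HasDerivAt (travelPrimitive α) (√(1 + u) / √(1 + u - α)) u := by
  have hp : 0 < √(1 + u) := Real.sqrt_pos.2 (by linarith)
  have hq : 0 < √(1 + u - α) := Real.sqrt_pos.2 (by linarith)
  have hp2 : √(1 + u) ^ 2 = 1 + u := Real.sq_sqrt (by linarith)
  have hq2 : √(1 + u - α) ^ 2 = 1 + u - α := Real.sq_sqrt (by linarith)
  have dp : HasDerivAt (fun x : ℝ => √(1 + x)) (1 / (2 * √(1 + u))) u :=
    ((hasDerivAt_id u).const_add 1).sqrt (by simp only [id]; linarith)
  have dq : HasDerivAt (fun x : ℝ => √(1 + x - α)) (1 / (2 * √(1 + u - α))) u :=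
    (((hasDerivAt_id u).const_add 1).sub_const α).sqrt (by simp only [id]; linarith)
  refine ((dp.mul dq).add
    (((dp.add dq).log (by simp only [Pi.add_apply]; positivity)).const_mul α)).congr_deriv ?_
  have hα' : α = √(1 + u) ^ 2 - √(1 + u - α) ^ 2 := by rw [hp2, hq2]; ring
  simp only [Pi.add_apply]
  generalize √(1 + u - α) = q at *
  generalize √(1 + u) = p at *
  rw [hα']
  field_simp
  ring

lemma inv_sqrt_energy_eq {α u : ℝ} (hα : 0 < α) (hu : -1 + α < u) :
    (√(2 * (1 / α - 1 / (1 + u))))⁻¹ = √(α / 2) * (√(1 + u) / √(1 + u - α)) := by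
  have hv : 0 < 1 + u := by linarith
  rw [← Real.sqrt_div hv.le, ← Real.sqrt_mul (by positivity), ← Real.sqrt_inv]
  congr 1
  have hw : 1 + u - α ≠ 0 := by linarith
  have : 2 * (1 / α - 1 / (1 + u)) = 2 * (1 + u - α) / (α * (1 + u)) := by
    field_simp
  rw [this]
  field_simp

/-- The improper integral `l₀(α) = ∫_{-1+α}^0 [2(1/α - 1/(1+u))]^{-1/2} du`
converges for `α ∈ (0,1)` and equals
`√(α/2)(√(1-α) + α ln(1+√(1-α)) - α ln(√α))`. -/
theorem stmt_9 (α : ℝ) (hα : α ∈ Set.Ioo (0 : ℝ) 1) :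
    IntegrableOn
      (fun u : ℝ => (Real.sqrt (2 * (1 / α - 1 / (1 + u))))⁻¹)
      (Set.Ioo (-1 + α) 0) ∧
    (∫ u in Set.Ioo (-1 + α) (0 : ℝ),
        (Real.sqrt (2 * (1 / α - 1 / (1 + u))))⁻¹)
      = Real.sqrt (α / 2) * (Real.sqrt (1 - α)
          + α * Real.log (1 + Real.sqrt (1 - α))
          - α * Real.log (Real.sqrt α)) := by
  obtain ⟨h0, h1⟩ := hα
  have hle : -1 + α ≤ 0 := by linarith
  have hcont : ContinuousOn (travelPrimitive α) (Set.Icc (-1 + α) 0) :=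
    (continuousOn_travelPrimitive h0).mono Set.Icc_subset_Ici_self
  have hderiv : ∀ u ∈ Set.Ioo (-1 + α) 0,
      HasDerivAt (travelPrimitive α) (√(1 + u) / √(1 + u - α)) u :=
    fun u hu => hasDerivAt_travelPrimitive h0 hu.1
  have hint : IntegrableOn (fun u => √(1 + u) / √(1 + u - α)) (Set.Ioc (-1 + α) 0) :=
    intervalIntegral.integrableOn_deriv_of_nonneg hcont hderiv fun u _ => by positivity
  have heq : Set.EqOn (fun u : ℝ => (√(2 * (1 / α - 1 / (1 + u))))⁻¹)
      (fun u => √(α / 2) * (√(1 + u) / √(1 + u - α))) (Set.Ioo (-1 + α) 0) :=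
    fun u hu => inv_sqrt_energy_eq h0 hu.1
  constructor
  · rw [integrableOn_congr_fun heq measurableSet_Ioo]
    exact (hint.mono_set Set.Ioo_subset_Ioc_self).const_mul _
  · rw [setIntegral_congr_fun measurableSet_Ioo heq, integral_const_mul,
      ← integral_Ioc_eq_integral_Ioo, ← intervalIntegral.integral_of_le hle,
      intervalIntegral.integral_eq_sub_of_hasDerivAt_of_le hle hcont hderiv
        ((intervalIntegrable_iff_integrableOn_Ioc_of_le hle).2 hint)]
    simp [travelPrimitive]
end

section
/- Let m ≥ 3 be an integer and fix α ∈ (0,1). Define, for ε ∈ (0,α), l_ε(α) = ∫_{-1+α}^{0} [2( (1/α - 1/(1+u)) + (ε^{m-2}/(m-1))((1+u)^{-(m-1)} - α^{-(m-1)}) )]^{-1/2} du, and l₀(α) = ∫_{-1+α}^{0} [2(1/α - 1/(1+u))]^{-1/2} du. Then lim_{ε→0⁺} (l_ε(α) - l₀(α))/ε^{m-2} = (α^{3/2}/√2) · (1/(2(m-1)α^{m-2})) ∫_{0}^{-1+1/α} ((v+1)/v)^{1/2} · ((1+v)^{m-1} - 1)/(v (1+v)^{m-2}) dv, and this limiting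 integral is finite. -/
open MeasureTheory Filter

/-- Differentiation of `δ ↦ ∫ w / √(1 - δ h)` at `δ = 0` for a bounded perturbation `h`. -/
lemma hasDerivAt_integral_mul_inv_sqrt_one_sub {X : Type*} [MeasurableSpace X] {μ : Measure X}
    {w h : X → ℝ} {M : ℝ} (hw : Integrable w μ) (hh : AEStronglyMeasurable h μ)
    (hM : ∀ᵐ x ∂μ, |h x| ≤ M) (hM0 : 0 ≤ M) :
    HasDerivAt (fun δ : ℝ => ∫ x, w x * (√(1 - δ * h x))⁻¹ ∂μ)
      (∫ x, w x * (h x / 2) ∂μ) 0 := by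
  set F' : ℝ → X → ℝ := fun δ x =>
    w x * (-(-h x / (2 * √(1 - δ * h x))) / √(1 - δ * h x) ^ 2) with hF'
  have hF'0 : F' 0 = fun x => w x * (h x / 2) := by
    funext x
    simp [hF', neg_div]
  have hmeas : ∀ δ : ℝ, AEStronglyMeasurable (fun x => w x * (√(1 - δ * h x))⁻¹) μ := by
    intro δ
    refine hw.aestronglyMeasurable.mul (AEMeasurable.aestronglyMeasurable ?_)
    have := hh.aemeasurable
    fun_prop
  have hlow : ∀ x, |h x| ≤ M → ∀ δ ∈ Metric.ball (0 : ℝ) (1 / (2 * (M + 1))),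
      1 / 4 ≤ 1 - δ * h x := by
    intro x hx δ hδ
    rw [mem_ball_zero_iff, Real.norm_eq_abs] at hδ
    have h1 : |δ * h x| ≤ 1 / (2 * (M + 1)) * M := by
      rw [abs_mul]
      gcongr
    have h2 : 1 / (2 * (M + 1)) * M ≤ 1 / 2 := by
      rw [div_mul_eq_mul_div, div_le_div_iff₀ (by positivity) (by positivity)]
      linarith
    linarith [le_abs_self (δ * h x)]
  have key := hasDerivAt_integral_of_dominated_loc_of_deriv_le (μ := μ) (𝕜 := ℝ)
    (F := fun δ x => w x * (√(1 - δ * h x))⁻¹) (F' := F') (x₀ := 0)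
    (bound := fun x => |w x| * (4 * M))
    (Metric.ball_mem_nhds (0 : ℝ) (ε := 1 / (2 * (M + 1))) (by positivity))
    (Eventually.of_forall hmeas) (by simpa using hw)
    (by
      rw [hF'0]
      exact hw.aestronglyMeasurable.mul (hh.aemeasurable.div_const 2).aestronglyMeasurable)
    (by
      filter_upwards [hM] with x hx δ hδ
      have h1 := hlow x hx δ hδ
      have h2 : 1 / 2 ≤ √(1 - δ * h x) := Real.le_sqrt_of_sq_le (by linarith)
      rw [hF', norm_mul, Real.norm_eq_abs, Real.norm_eq_abs]
      refine mul_le_mul_of_nonneg_left ?_ (abs_nonneg _)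
      rw [← neg_div, neg_neg, div_div, abs_div, abs_of_pos (a := 2 * _ * _) (by positivity),
        div_le_iff₀ (by positivity)]
      have h3 : (1 / 2 : ℝ) ^ 3 ≤ √(1 - δ * h x) ^ 3 := by gcongr
      nlinarith)
    (hw.abs.mul_const _)
    (by
      filter_upwards [hM] with x hx δ hδ
      have h1 := hlow x hx δ hδ
      have h2 : 0 < √(1 - δ * h x) := Real.sqrt_pos.2 (by linarith)
      have h3 : HasDerivAt (fun δ : ℝ => 1 - δ * h x) (-h x) δ := by
        simpa using ((hasDerivAt_id δ).mul_const (h x)).const_sub 1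
      exact ((h3.sqrt (by linarith)).fun_inv h2.ne').const_mul (w x))
  simpa only [hF'0] using key.2

lemma integrableOn_sqrt_add_one_div (R : ℝ) :
    IntegrableOn (fun v : ℝ => √((v + 1) / v)) (Set.Ioo 0 R) := by
  rcases le_or_gt R 0 with hR | hR
  · simp [Set.Ioo_eq_empty_of_le hR]
  have h1 : IntegrableOn (fun v : ℝ => v ^ (-(1 / 2) : ℝ)) (Set.Ioo 0 R) := by
    have := intervalIntegral.intervalIntegrable_rpow' (a := 0) (b := R) (r := -(1 / 2))
      (by norm_num)
    rw [intervalIntegrable_iff_integrableOn_Ioo_of_le hR.le] at this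
    exact this
  refine Integrable.mono' (h1.const_mul √(R + 1)) (Measurable.aestronglyMeasurable (by fun_prop)) ?_
  filter_upwards [self_mem_ae_restrict measurableSet_Ioo] with v hv
  rw [Real.norm_of_nonneg (Real.sqrt_nonneg _), Real.sqrt_div (by linarith [hv.1]),
    Real.rpow_neg hv.1.le, ← Real.sqrt_eq_rpow, div_eq_mul_inv]
  gcongr
  exact hv.2.le

/-- The normalized perturbation is nonnegative and bounded, by the mean value inequality for
powers. -/
lemma one_add_pow_sub_one_div_mem_Icc (n : ℕ) {v : ℝ} (hv : 0 < v) :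
    ((1 + v) ^ (n + 1) - 1) / (v * (1 + v) ^ n) ∈ Set.Icc (0 : ℝ) (n + 1) := by
  have h1 : 1 ≤ (1 + v) ^ (n + 1) := one_le_pow₀ (by linarith)
  refine ⟨div_nonneg (by linarith) (by positivity), (div_le_iff₀ (by positivity)).2 ?_⟩
  clear h1
  induction n with
  | zero => simp
  | succ n ih =>
    have h2 : 1 ≤ (1 + v) ^ (n + 1) := one_le_pow₀ (by linarith)
    push_cast
    have h3 := mul_le_mul_of_nonneg_left ih (by linarith : 0 ≤ 1 + v)
    have h4 : (1 + v) * ((n + 1) * (v * (1 + v) ^ n)) = (n + 1) * (v * (1 + v) ^ (n + 1)) := by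
      ring
    have h5 := mul_le_mul_of_nonneg_left h2 hv.le
    rw [pow_succ (1 + v) (n + 1)]
    nlinarith

/-- The affine substitution `u = -1 + α (1 + v)`. -/
lemma setIntegral_Ioo_eq_mul_setIntegral_comp {α : ℝ} (hα : α ∈ Set.Ioo (0 : ℝ) 1) (f : ℝ → ℝ) :
    ∫ u in Set.Ioo (-1 + α) (0 : ℝ), f u
      = α * ∫ v in Set.Ioo (0 : ℝ) (-1 + 1 / α), f (α * v + (-1 + α)) := by
  have h0 : 0 < α := hα.1
  have h1 : 1 ≤ 1 / α := by rw [le_div_iff₀ h0]; linarith [hα.2]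
  rw [← integral_Ioc_eq_integral_Ioo, ← integral_Ioc_eq_integral_Ioo,
    ← intervalIntegral.integral_of_le (by linarith [hα.2]),
    ← intervalIntegral.integral_of_le (by linarith),
    intervalIntegral.integral_comp_mul_add _ h0.ne', smul_eq_mul, mul_inv_cancel_left₀ h0.ne']
  congr 1
  · ring
  · field_simp
    ring

/-- Factorization of the perturbed potential after the substitution `u = -1 + α (1 + v)`. -/
lemma perturbed_inv_sqrt_eq {α v : ℝ} (hα : 0 < α) (hv : 0 < v) (n : ℕ) (δ : ℝ) :
    (√(2 * ((1 / α - 1 / (1 + (α * v + (-1 + α)))) + δ / ((n : ℝ) + 1)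
        * (((1 + (α * v + (-1 + α))) ^ (n + 1))⁻¹ - (α ^ (n + 1))⁻¹))))⁻¹
      = √α / √2 * (√((v + 1) / v) * (√(1 - δ / ((n + 1) * α ^ n)
        * (((1 + v) ^ (n + 1) - 1) / (v * (1 + v) ^ n))))⁻¹) := by
  have h1 : 1 + (α * v + (-1 + α)) = α * (1 + v) := by ring
  have hv1 : 0 < 1 + v := by linarith
  have hn : (0 : ℝ) < n + 1 := by positivity
  have h2 : 2 * ((1 / α - 1 / (α * (1 + v))) + δ / ((n : ℝ) + 1)
        * (((α * (1 + v)) ^ (n + 1))⁻¹ - (α ^ (n + 1))⁻¹))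
      = (α / 2 * ((v + 1) / v))⁻¹ * (1 - δ / ((n + 1) * α ^ n)
        * (((1 + v) ^ (n + 1) - 1) / (v * (1 + v) ^ n))) := by
    rw [mul_pow, add_comm v 1]
    field_simp
    ring
  rw [h1, h2, Real.sqrt_mul (by positivity), Real.sqrt_inv, mul_inv, inv_inv,
    Real.sqrt_mul (by positivity), Real.sqrt_div hα.le, mul_assoc]

/-- First-order regular perturbation expansion of the regularized trajectory
half-length: for fixed `α ∈ (0,1)`,
`(l_ε(α) - l₀(α))/ε^(m-2)` converges as `ε → 0⁺` to
`(α^{3/2}/√2)·(1/(2(m-1)α^(m-2))) ∫_0^{-1+1/α} ((v+1)/v)^{1/2}((1+v)^(m-1)-1)/(v(1+v)^(m-2)) dv`,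
and this limiting integral is finite. -/
theorem stmt_14 (m : ℕ) (hm : 3 ≤ m) (α : ℝ) (hα : α ∈ Set.Ioo (0 : ℝ) 1) :
    IntegrableOn
      (fun v : ℝ => Real.sqrt ((v + 1) / v)
        * (((1 + v) ^ (m - 1) - 1) / (v * (1 + v) ^ (m - 2))))
      (Set.Ioo (0 : ℝ) (-1 + 1 / α)) ∧
    Tendsto
      (fun ε : ℝ =>
        ((∫ u in Set.Ioo (-1 + α) (0 : ℝ),
            (Real.sqrt (2 * ((1 / α - 1 / (1 + u))
              + (ε ^ (m - 2) / ((m : ℝ) - 1))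
                * (((1 + u) ^ (m - 1))⁻¹ - (α ^ (m - 1))⁻¹))))⁻¹)
          - ∫ u in Set.Ioo (-1 + α) (0 : ℝ),
              (Real.sqrt (2 * (1 / α - 1 / (1 + u))))⁻¹) / ε ^ (m - 2))
      (nhdsWithin 0 (Set.Ioi (0 : ℝ)))
      (nhds ((α ^ ((3 : ℝ) / 2) / Real.sqrt 2)
        * (1 / (2 * ((m : ℝ) - 1) * α ^ (m - 2)))
        * ∫ v in Set.Ioo (0 : ℝ) (-1 + 1 / α),
            Real.sqrt ((v + 1) / v)
              * (((1 + v) ^ (m - 1) - 1) / (v * (1 + v) ^ (m - 2))))) := by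
  obtain ⟨n, rfl⟩ : ∃ n, m = n + 2 := ⟨m - 2, by omega⟩
  have hn : n ≠ 0 := by omega
  simp only [Nat.add_sub_cancel, show n + 2 - 1 = n + 1 by omega]
  have hcast : ((n + 2 : ℕ) : ℝ) - 1 = n + 1 := by push_cast; ring
  rw [hcast]
  have h0 : 0 < α := hα.1
  set R := -1 + 1 / α
  set H : ℝ → ℝ := fun v => ((1 + v) ^ (n + 1) - 1) / (v * (1 + v) ^ n) with hH
  have hHm : Measurable H := by fun_prop
  have hw := integrableOn_sqrt_add_one_div R
  have hHM : ∀ᵐ v ∂(volume.restrict (Set.Ioo 0 R)), |H v| ≤ n + 1 := by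
    filter_upwards [self_mem_ae_restrict measurableSet_Ioo] with v hv
    have := one_add_pow_sub_one_div_mem_Icc n hv.1
    rw [abs_of_nonneg this.1]
    exact this.2
  refine ⟨hw.mul_bdd hHm.aestronglyMeasurable hHM, ?_⟩
  have hderiv := hasDerivAt_integral_mul_inv_sqrt_one_sub hw hHm.aestronglyMeasurable hHM
    (by positivity)
  set c : ℝ := ((n + 1) * α ^ n)⁻¹ with hc
  have hc0 : 0 < c := by positivity
  have hδ : Tendsto (fun ε : ℝ => c * ε ^ n) (nhdsWithin 0 (Set.Ioi 0))
      (nhdsWithin 0 (Set.Ioi 0)) := by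
    refine tendsto_nhdsWithin_iff.2 ⟨?_, ?_⟩
    · have : Continuous fun ε : ℝ => c * ε ^ n := by fun_prop
      simpa [hn] using (this.tendsto 0).mono_left nhdsWithin_le_nhds
    · filter_upwards [self_mem_nhdsWithin] with ε (hε : 0 < ε)
      exact mul_pos hc0 (pow_pos hε n)
  have hintegral : ∀ δ : ℝ, ∫ u in Set.Ioo (-1 + α) (0 : ℝ),
      (√(2 * ((1 / α - 1 / (1 + u)) + δ / ((n : ℝ) + 1)
        * (((1 + u) ^ (n + 1))⁻¹ - (α ^ (n + 1))⁻¹))))⁻¹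
      = α * (√α / √2) * ∫ v in Set.Ioo 0 R, √((v + 1) / v) * (√(1 - c * δ * H v))⁻¹ := by
    intro δ
    rw [setIntegral_Ioo_eq_mul_setIntegral_comp hα, mul_assoc, ← integral_const_mul (√α / √2)]
    congr 1
    refine setIntegral_congr_fun measurableSet_Ioo fun v hv => ?_
    simp only [perturbed_inv_sqrt_eq h0 hv.1, hH, hc, inv_mul_eq_div]
  have hintegral_zero := hintegral 0
  simp only [zero_div, zero_mul, add_zero, mul_zero] at hintegral_zero
  have hlim := ((hderiv.tendsto_slope_zero_right.comp hδ).const_mul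
    (α * (√α / √2) * c))
  have hα32 : α ^ ((3 : ℝ) / 2) = α * √α := by
    rw [show (3 : ℝ) / 2 = 1 + 1 / 2 by norm_num, Real.rpow_add h0, Real.rpow_one,
      Real.sqrt_eq_rpow]
  convert hlim.congr' ?_ using 2
  · have hhalf : ∫ v in Set.Ioo 0 R, √((v + 1) / v) * (H v / 2)
        = (∫ v in Set.Ioo 0 R, √((v + 1) / v) * H v) / 2 := by
      rw [← integral_div]
      simp only [mul_div_assoc]
    rw [hhalf, hα32, hc]
    change _ * ∫ v in Set.Ioo 0 R, √((v + 1) / v) * H v = _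
    generalize ∫ v in Set.Ioo 0 R, √((v + 1) / v) * H v = I
    field_simp
  · filter_upwards [self_mem_nhdsWithin] with ε (hε : 0 < ε)
    have hε' : ε ^ n ≠ 0 := (pow_pos hε n).ne'
    simp only [hintegral, hintegral_zero, Function.comp, zero_add, zero_mul, smul_eq_mul]
    field_simp
end

section
/- Let m ≥ 4 be an integer and η ≥ 0, and define H(v) = (1/(1+η)^{m-2}) · ( Σ_{k=1}^{m-2} C(m-2,k) (k/(k+1)) v^k ) / (1+v)^{m-2} for v ≥ 0, where C(m-2,k) denotes the binomial coefficient. Then H(0) = 0, H is differentiable on [0,∞) with H'(v) = (1/(1+η)^{m-2}) (1/(1+v)^{m-1}) [ (m-2)/2 + Σ_{k=1}^{m-3} C(m-2,k+1) v^k/(k+2) ], and in particular H'(v) > 0 for all v ≥ 0, so H is strictly increasing on [0,∞). -/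
/-- The weighted binomial sum `Σ_{k=0}^{n} C(n,k) (k/(k+1)) v^k`. -/
noncomputable def weightedBinomialSum (n : ℕ) (v : ℝ) : ℝ :=
  ∑ k ∈ Finset.range (n + 1), (Nat.choose n k : ℝ) * ((k : ℝ) / ((k : ℝ) + 1)) * v ^ k

lemma sum_Icc_eq_weightedBinomialSum (n : ℕ) (v : ℝ) :
    ∑ k ∈ Finset.Icc 1 n, (Nat.choose n k : ℝ) * ((k : ℝ) / ((k : ℝ) + 1)) * v ^ k =
      weightedBinomialSum n v := by
  rw [weightedBinomialSum, Finset.sum_range_succ', ← Finset.Ico_add_one_right_eq_Icc,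
    Finset.sum_Ico_eq_sum_range]
  simp [add_comm]

lemma hasDerivAt_weightedBinomialSum (n : ℕ) (v : ℝ) :
    HasDerivAt (weightedBinomialSum n)
      (∑ k ∈ Finset.range n,
        (Nat.choose n (k + 1) : ℝ) * (((k : ℝ) + 1) ^ 2 / ((k : ℝ) + 2)) * v ^ k) v := by
  have h : HasDerivAt (weightedBinomialSum n)
      (∑ k ∈ Finset.range (n + 1),
        (Nat.choose n k : ℝ) * ((k : ℝ) / ((k : ℝ) + 1)) * (k * v ^ (k - 1))) v :=
    HasDerivAt.fun_sum fun k _ => (hasDerivAt_pow k v).const_mul _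
  convert h using 1
  rw [Finset.sum_range_succ']
  simp only [Nat.cast_zero, zero_div, mul_zero, zero_mul, add_zero]
  refine Finset.sum_congr rfl fun k _ => ?_
  push_cast
  rw [show (k : ℝ) + 1 + 1 = k + 2 by ring]
  ring

/-- The numerator of the derivative of `weightedBinomialSum n v / (1 + v) ^ n`. -/
lemma one_add_mul_deriv_weightedBinomialSum_sub (n : ℕ) (v : ℝ) :
    (1 + v) * (∑ k ∈ Finset.range n,
        (Nat.choose n (k + 1) : ℝ) * (((k : ℝ) + 1) ^ 2 / ((k : ℝ) + 2)) * v ^ k)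
      - n * weightedBinomialSum n v =
    ∑ k ∈ Finset.range n, (Nat.choose n (k + 1) : ℝ) * v ^ k / ((k : ℝ) + 2) := by
  have hshift : v * (∑ k ∈ Finset.range n,
        (Nat.choose n (k + 1) : ℝ) * (((k : ℝ) + 1) ^ 2 / ((k : ℝ) + 2)) * v ^ k) =
      ∑ k ∈ Finset.range (n + 1), (Nat.choose n k : ℝ) * ((k : ℝ) ^ 2 / ((k : ℝ) + 1)) * v ^ k := by
    rw [Finset.sum_range_succ', Finset.mul_sum]
    simp only [Nat.cast_zero, ne_eq, OfNat.ofNat_ne_zero, not_false_eq_true, zero_pow, zero_div,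
      mul_zero, zero_mul, add_zero]
    refine Finset.sum_congr rfl fun k _ => ?_
    push_cast
    rw [show (k : ℝ) + 1 + 1 = k + 2 by ring]
    ring
  have hdiff : n * weightedBinomialSum n v - ∑ k ∈ Finset.range (n + 1),
        (Nat.choose n k : ℝ) * ((k : ℝ) ^ 2 / ((k : ℝ) + 1)) * v ^ k =
      ∑ k ∈ Finset.range n, (Nat.choose n (k + 1) : ℝ) * k * v ^ k := by
    have hlast : ∑ k ∈ Finset.range n, (Nat.choose n (k + 1) : ℝ) * k * v ^ k =
        ∑ k ∈ Finset.range (n + 1), (Nat.choose n (k + 1) : ℝ) * k * v ^ k := by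
      simp [Finset.sum_range_succ]
    rw [hlast, weightedBinomialSum, Finset.mul_sum, ← Finset.sum_sub_distrib]
    refine Finset.sum_congr rfl fun k hk => ?_
    have hkn : k ≤ n := Nat.lt_succ_iff.mp (Finset.mem_range.mp hk)
    have hchoose : (Nat.choose n (k + 1) : ℝ) * (k + 1) = Nat.choose n k * (n - k) := by
      rw [← Nat.cast_sub hkn]
      exact_mod_cast Nat.choose_succ_right_eq n k
    have hk1 : (k : ℝ) + 1 ≠ 0 := by positivity
    field_simp
    linear_combination (-(k : ℝ)) * v ^ k * hchoose
  rw [add_mul, one_mul, hshift, add_sub_assoc, ← neg_sub, hdiff, ← sub_eq_add_neg,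
    ← Finset.sum_sub_distrib]
  refine Finset.sum_congr rfl fun k _ => ?_
  have hk2 : (k : ℝ) + 2 ≠ 0 := by positivity
  field_simp
  ring

lemma hasDerivAt_weightedBinomialSum_div (n : ℕ) {v : ℝ} (hv : 1 + v ≠ 0) :
    HasDerivAt (fun x => weightedBinomialSum n x / (1 + x) ^ n)
      (1 / (1 + v) ^ (n + 1) *
        ∑ k ∈ Finset.range n, (Nat.choose n (k + 1) : ℝ) * v ^ k / ((k : ℝ) + 2)) v := by
  have hpow : HasDerivAt (fun x : ℝ => (1 + x) ^ n) (n * (1 + v) ^ (n - 1) * 1) v :=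
    ((hasDerivAt_id v).const_add 1).fun_pow n
  refine ((hasDerivAt_weightedBinomialSum n v).fun_div hpow (pow_ne_zero n hv)).congr_deriv ?_
  rw [← one_add_mul_deriv_weightedBinomialSum_sub]
  rcases n with _ | n
  · simp [weightedBinomialSum]
  · rw [Nat.add_sub_cancel]
    field_simp
    ring

lemma sum_range_succ_eq_half_add_sum_Icc (p : ℕ) (v : ℝ) :
    ∑ k ∈ Finset.range (p + 1), (Nat.choose (p + 1) (k + 1) : ℝ) * v ^ k / ((k : ℝ) + 2) =
      ((p : ℝ) + 1) / 2 +
        ∑ k ∈ Finset.Icc 1 p, (Nat.choose (p + 1) (k + 1) : ℝ) * v ^ k / ((k : ℝ) + 2) := by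
  rw [Finset.sum_range_succ', ← Finset.Ico_add_one_right_eq_Icc, Finset.sum_Ico_eq_sum_range,
    add_comm]
  simp [add_comm]

/-- Structure of the function `H(v) = (1/(1+η)^(m-2))·(Σ_{k=1}^{m-2} C(m-2,k)(k/(k+1))v^k)/(1+v)^(m-2)`
appearing in the divergence analysis of `l_ε(α)` as `α → ε⁺`: `H(0)=0`, `H` has at
every `v ≥ 0` the derivative
`(1/(1+η)^(m-2))(1/(1+v)^(m-1))[(m-2)/2 + Σ_{k=1}^{m-3} C(m-2,k+1) v^k/(k+2)]`,
which is positive, so `H` is strictly increasing on `[0,∞)`. -/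
theorem stmt_16 (m : ℕ) (hm : 4 ≤ m) (η : ℝ) (hη : 0 ≤ η)
    (H : ℝ → ℝ)
    (hH : ∀ v : ℝ, H v = (1 / (1 + η) ^ (m - 2))
      * ((∑ k ∈ Finset.Icc 1 (m - 2),
          (Nat.choose (m - 2) k : ℝ) * ((k : ℝ) / ((k : ℝ) + 1)) * v ^ k)
        / (1 + v) ^ (m - 2))) :
    H 0 = 0 ∧
    (∀ v : ℝ, 0 ≤ v →
      HasDerivAt H
        ((1 / (1 + η) ^ (m - 2)) * (1 / (1 + v) ^ (m - 1))
          * (((m : ℝ) - 2) / 2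
            + ∑ k ∈ Finset.Icc 1 (m - 3),
                (Nat.choose (m - 2) (k + 1) : ℝ) * v ^ k / ((k : ℝ) + 2))) v ∧
      0 < (1 / (1 + η) ^ (m - 2)) * (1 / (1 + v) ^ (m - 1))
          * (((m : ℝ) - 2) / 2
            + ∑ k ∈ Finset.Icc 1 (m - 3),
                (Nat.choose (m - 2) (k + 1) : ℝ) * v ^ k / ((k : ℝ) + 2))) ∧
    StrictMonoOn H (Set.Ici (0 : ℝ)) := by
  obtain ⟨p, rfl⟩ : ∃ p, m = p + 3 := ⟨m - 3, by omega⟩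
  simp only [show p + 3 - 2 = p + 1 by omega, show p + 3 - 1 = p + 1 + 1 by omega,
    Nat.add_sub_cancel, sum_Icc_eq_weightedBinomialSum] at hH ⊢
  have hcast : ((p + 3 : ℕ) : ℝ) - 2 = p + 1 := by push_cast; ring
  simp only [hcast]
  have hderiv : ∀ v : ℝ, 0 ≤ v → HasDerivAt H
      ((1 / (1 + η) ^ (p + 1)) * (1 / (1 + v) ^ (p + 1 + 1))
        * (((p : ℝ) + 1) / 2 + ∑ k ∈ Finset.Icc 1 p,
            (Nat.choose (p + 1) (k + 1) : ℝ) * v ^ k / ((k : ℝ) + 2))) v := by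
    intro v hv
    rw [funext hH, mul_assoc, ← sum_range_succ_eq_half_add_sum_Icc]
    exact (hasDerivAt_weightedBinomialSum_div (p + 1) (by positivity)).const_mul _
  have hpos : ∀ v : ℝ, 0 ≤ v → 0 < (1 / (1 + η) ^ (p + 1)) * (1 / (1 + v) ^ (p + 1 + 1))
      * (((p : ℝ) + 1) / 2 + ∑ k ∈ Finset.Icc 1 p,
          (Nat.choose (p + 1) (k + 1) : ℝ) * v ^ k / ((k : ℝ) + 2)) := by
    intro v hv
    positivity
  refine ⟨?_, fun v hv => ⟨hderiv v hv, hpos v hv⟩, ?_⟩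
  · simp [hH, weightedBinomialSum, Finset.sum_range_succ']
  · refine strictMonoOn_of_deriv_pos (convex_Ici 0)
      (fun v hv => (hderiv v hv).continuousAt.continuousWithinAt) fun v hv => ?_
    have hv0 : 0 ≤ v := interior_subset hv
    rw [(hderiv v hv0).deriv]
    exact hpos v hv0
end

section
/- Let m ≥ 4 be an integer and η ≥ 0, and define H(v) = (1/(1+η)^{m-2}) · ( Σ_{k=1}^{m-2} C(m-2,k) (k/(k+1)) v^k ) / (1+v)^{m-2} for v ≥ 0, where C(m-2,k) denotes the binomial coefficient. Then: (i) lim_{v→∞} H(v) = (1/(1+η)^{m-2}) · (m-2)/(m-1); and (ii) for every L > 0 and every v ∈ [0,L], (H(L)/L) · v ≤ H(v) ≤ ((m-2)/(2(1+η)^{m-2})) · v; that is, on [0,L] the graph of H lies above the secant line through the origin and (L, H(L)) and below its tangent line at the origin. -/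
open Filter

lemma sum_choose_succ_mul_pow (n : ℕ) (v : ℝ) :
    ∑ k ∈ Finset.range (n + 1), ((n + 1).choose (k + 1) : ℝ) * v ^ k
      = ∑ j ∈ Finset.range (n + 1), (1 + v) ^ j := by
  induction n with
  | zero => simp
  | succ n ih =>
    have hbinom : (1 + v) ^ (n + 1)
        = ∑ k ∈ Finset.range (n + 2), ((n + 1).choose k : ℝ) * v ^ k := by
      rw [add_comm, add_pow]
      exact Finset.sum_congr rfl fun k _ => by ring
    rw [Finset.sum_range_succ (fun j => (1 + v) ^ j) (n + 1), ← ih, hbinom]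
    simp_rw [Nat.choose_succ_succ (n + 1), Nat.cast_add, add_mul, Finset.sum_add_distrib]
    rw [Finset.sum_range_succ (fun k => ((n + 1).choose (k + 1) : ℝ) * v ^ k) (n + 1),
      Nat.choose_succ_self, Nat.cast_zero, zero_mul, add_zero, add_comm]

lemma sum_choose_mul_div_mul_pow (n : ℕ) (v : ℝ) :
    ∑ k ∈ Finset.Icc 1 n, (n.choose k : ℝ) * ((k : ℝ) / ((k : ℝ) + 1)) * v ^ k
      = (1 + v) ^ n - (∑ j ∈ Finset.range (n + 1), (1 + v) ^ j) / (n + 1) := by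
  have hrange : ∑ k ∈ Finset.Icc 1 n, (n.choose k : ℝ) * ((k : ℝ) / ((k : ℝ) + 1)) * v ^ k
      = ∑ k ∈ Finset.range (n + 1), (n.choose k : ℝ) * ((k : ℝ) / ((k : ℝ) + 1)) * v ^ k := by
    refine Finset.sum_subset (fun k hk => ?_) (fun k hk hk' => ?_)
    · simp only [Finset.mem_Icc, Finset.mem_range] at *; omega
    · have : k = 0 := by simp only [Finset.mem_Icc, Finset.mem_range] at *; omega
      simp [this]
  rw [hrange, ← sum_choose_succ_mul_pow, add_comm 1 v, add_pow, Finset.sum_div,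
    ← Finset.sum_sub_distrib]
  refine Finset.sum_congr rfl fun k _ => ?_
  have h : ((n : ℝ) + 1) * n.choose k = (n + 1).choose (k + 1) * (k + 1) := by
    exact_mod_cast Nat.add_one_mul_choose_eq n k
  have hn : (n : ℝ) + 1 ≠ 0 := by positivity
  have hk : (k : ℝ) + 1 ≠ 0 := by positivity
  rw [one_pow]
  field_simp
  linear_combination -(v ^ k) * h

lemma sum_choose_div_one_add_pow (n : ℕ) {v : ℝ} (hv : 0 ≤ v) :
    (∑ k ∈ Finset.Icc 1 n, (n.choose k : ℝ) * ((k : ℝ) / ((k : ℝ) + 1)) * v ^ k) / (1 + v) ^ n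
      = 1 - (∑ j ∈ Finset.range (n + 1), ((1 + v)⁻¹) ^ j) / (n + 1) := by
  have hv' : 1 + v ≠ 0 := by positivity
  have hrev : (∑ j ∈ Finset.range (n + 1), (1 + v) ^ j) / (1 + v) ^ n
      = ∑ j ∈ Finset.range (n + 1), ((1 + v)⁻¹) ^ j := by
    rw [← Finset.sum_range_reflect, Finset.sum_div]
    refine Finset.sum_congr rfl fun j hj => ?_
    have hj' : j ≤ n := by simpa [Nat.lt_succ_iff] using hj
    rw [Nat.add_sub_cancel, pow_sub₀ _ hv' hj', inv_pow]
    field_simp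
  rw [sum_choose_mul_div_mul_pow, sub_div, div_self (pow_ne_zero _ hv'), div_right_comm, hrev]

lemma one_sub_inv_one_add_pow (j : ℕ) {v : ℝ} (hv : 0 ≤ v) :
    1 - ((1 + v)⁻¹) ^ j = v * ∑ i ∈ Finset.range j, ((1 + v)⁻¹) ^ (i + 1) := by
  have hv' : 1 + v ≠ 0 := by positivity
  have h : v * (1 + v)⁻¹ = 1 - (1 + v)⁻¹ := by field_simp; ring
  simp_rw [pow_succ]
  rw [← Finset.sum_mul, ← mul_neg_geom_sum, ← h]
  ring

lemma sum_choose_div_one_add_pow_eq_mul (n : ℕ) {v : ℝ} (hv : 0 ≤ v) :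
    (∑ k ∈ Finset.Icc 1 n, (n.choose k : ℝ) * ((k : ℝ) / ((k : ℝ) + 1)) * v ^ k) / (1 + v) ^ n
      = v * ((∑ j ∈ Finset.range (n + 1), ∑ i ∈ Finset.range j, ((1 + v)⁻¹) ^ (i + 1))
          / (n + 1)) := by
  have hn : (n : ℝ) + 1 ≠ 0 := by positivity
  rw [sum_choose_div_one_add_pow n hv, ← mul_div_assoc, Finset.mul_sum]
  simp_rw [← one_sub_inv_one_add_pow _ hv]
  rw [Finset.sum_sub_distrib]
  simp [sub_div, div_self hn]

lemma sum_sum_inv_one_add_pow_anti (n : ℕ) {v w : ℝ} (hv : 0 ≤ v) (hvw : v ≤ w) :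
    ∑ j ∈ Finset.range n, ∑ i ∈ Finset.range j, ((1 + w)⁻¹) ^ (i + 1)
      ≤ ∑ j ∈ Finset.range n, ∑ i ∈ Finset.range j, ((1 + v)⁻¹) ^ (i + 1) := by
  have hw : 0 ≤ w := hv.trans hvw
  gcongr

lemma tendsto_sum_choose_div_one_add_pow (n : ℕ) :
    Tendsto (fun v : ℝ =>
      (∑ k ∈ Finset.Icc 1 n, (n.choose k : ℝ) * ((k : ℝ) / ((k : ℝ) + 1)) * v ^ k) / (1 + v) ^ n)
      atTop (nhds ((n : ℝ) / (n + 1))) := by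
  have hn : (n : ℝ) + 1 ≠ 0 := by positivity
  have hinv : Tendsto (fun v : ℝ => (1 + v)⁻¹) atTop (nhds 0) :=
    tendsto_inv_atTop_zero.comp (tendsto_atTop_add_const_left _ _ tendsto_id)
  have hsum : Tendsto (fun v : ℝ => ∑ j ∈ Finset.range (n + 1), ((1 + v)⁻¹) ^ j) atTop
      (nhds (∑ j ∈ Finset.range (n + 1), (0 : ℝ) ^ j)) :=
    tendsto_finsetSum _ fun j _ => hinv.pow j
  have hlim : (n : ℝ) / (n + 1)
      = 1 - (∑ j ∈ Finset.range (n + 1), (0 : ℝ) ^ j) / (n + 1) := by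
    rw [Finset.sum_range_succ']
    simp only [ne_eq, Nat.succ_ne_zero, not_false_eq_true, zero_pow, Finset.sum_const_zero,
      pow_zero, zero_add]
    field_simp
    ring
  rw [hlim]
  refine ((hsum.div_const _).const_sub 1).congr' ?_
  filter_upwards [eventually_ge_atTop 0] with v hv
  exact (sum_choose_div_one_add_pow n hv).symm

/-- Asymptotics and chord/tangent bounds for
`H(v) = (1/(1+η)^(m-2))·(Σ_{k=1}^{m-2} C(m-2,k)(k/(k+1))v^k)/(1+v)^(m-2)`:
(i) `H(v) → (1/(1+η)^(m-2))·(m-2)/(m-1)` as `v → ∞`; (ii) for every `L > 0` and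
`v ∈ [0,L]`, `(H(L)/L)·v ≤ H(v) ≤ ((m-2)/(2(1+η)^(m-2)))·v`. -/
theorem stmt_17 (m : ℕ) (hm : 4 ≤ m) (η : ℝ) (hη : 0 ≤ η)
    (H : ℝ → ℝ)
    (hH : ∀ v : ℝ, H v = (1 / (1 + η) ^ (m - 2))
      * ((∑ k ∈ Finset.Icc 1 (m - 2),
          (Nat.choose (m - 2) k : ℝ) * ((k : ℝ) / ((k : ℝ) + 1)) * v ^ k)
        / (1 + v) ^ (m - 2))) :
    Tendsto H atTop
      (nhds ((1 / (1 + η) ^ (m - 2)) * (((m : ℝ) - 2) / ((m : ℝ) - 1)))) ∧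
    ∀ L : ℝ, 0 < L → ∀ v ∈ Set.Icc (0 : ℝ) L,
      (H L / L) * v ≤ H v ∧
      H v ≤ (((m : ℝ) - 2) / (2 * (1 + η) ^ (m - 2))) * v := by
  obtain ⟨n, rfl⟩ : ∃ n, m = n + 2 := ⟨m - 2, by omega⟩
  simp only [Nat.add_sub_cancel] at hH ⊢
  have hc : 0 < (1 + η) ^ n := by positivity
  have hn : (0 : ℝ) < n + 1 := by positivity
  have e₁ : ((n + 2 : ℕ) : ℝ) - 2 = n := by push_cast; ring
  have e₂ : ((n + 2 : ℕ) : ℝ) - 1 = n + 1 := by push_cast; ring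
  rw [e₁, e₂]
  refine ⟨?_, fun L hL v ⟨hv, hvL⟩ => ⟨?_, ?_⟩⟩
  · rw [funext hH]
    exact (tendsto_sum_choose_div_one_add_pow n).const_mul _
  · have hanti := sum_sum_inv_one_add_pow_anti (n + 1) hv hvL
    rw [hH, hH, sum_choose_div_one_add_pow_eq_mul n hv,
      sum_choose_div_one_add_pow_eq_mul n hL.le, mul_left_comm, mul_div_cancel_left₀ _ hL.ne',
      mul_left_comm, mul_comm _ v]
    gcongr
  · have hgauss : ∑ j ∈ Finset.range (n + 1), (j : ℝ) = n * (n + 1) / 2 := by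
      have h := congrArg (Nat.cast (R := ℝ)) (Finset.sum_range_id_mul_two (n + 1))
      push_cast [Nat.add_sub_cancel] at h
      linarith
    have hanti := sum_sum_inv_one_add_pow_anti (n + 1) le_rfl hv
    simp only [add_zero, inv_one, one_pow, Finset.sum_const, Finset.card_range, nsmul_eq_mul,
      mul_one, hgauss] at hanti
    rw [hH, sum_choose_div_one_add_pow_eq_mul n hv]
    calc _ ≤ 1 / (1 + η) ^ n * (v * (n * (n + 1) / 2 / (n + 1))) := by gcongr
      _ = _ := by field_simp
end
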